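/- There exists a ring automorphism φ of Hₙ such that φ(𝔖_w) = 𝔖_{w₀ww₀} for every w ∈ Sₙ. -/

import Mathlib

open Equiv MvPolynomial

attribute [local instance] Classical.propDecidable

namespace SchubertPieri

/-- Position `j ∈ {1,…,N}` (1-indexed) as an element of `Fin N` (0-indexed). -/
def pos (N : ℕ) [NeZero N] (j : ℕ) : Fin N :=
  ⟨(j - 1) % N, Nat.mod_lt _ (Nat.pos_of_ne_zero (NeZero.ne N))⟩

/-- The transposition `t_{a,b}` interchanging positions `a` and `b` (1-indexed). -/
def t (N : ℕ) [NeZero N] (a b : ℕ) : Equiv.Perm (Fin N) :=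
  Equiv.swap (pos N a) (pos N b)

/-- The value `w(j)` for `j ∈ {1,…,N}` (1-indexed). -/
def val {N : ℕ} [NeZero N] (w : Equiv.Perm (Fin N)) (j : ℕ) : ℕ :=
  (w (pos N j) : ℕ) + 1

/-- The length of `w`: its number of inversions. -/
def len {N : ℕ} (w : Equiv.Perm (Fin N)) : ℕ :=
  (Finset.univ.filter fun p : Fin N × Fin N => p.1 < p.2 ∧ w p.2 < w p.1).card

/-- The longest permutation `w₀ : j ↦ N+1-j`. -/
def w0 (N : ℕ) : Equiv.Perm (Fin N) :=
  ⟨Fin.rev, Fin.rev, Fin.rev_rev, Fin.rev_rev⟩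

/-- The product `t_{a 0, b 0} ⋯ t_{a (i-1), b (i-1)}`. -/
def tProd (N : ℕ) [NeZero N] (a b : ℕ → ℕ) (i : ℕ) : Equiv.Perm (Fin N) :=
  ((List.range i).map fun j => t N (a j) (b j)).prod

/-- `r[k,m] = t_{k,k+1} t_{k,k+2} ⋯ t_{k,k+m}`, the (m+1)-cycle with
`r[k,m](k) = k+m` and `r[k,m](j) = j-1` for `k+1 ≤ j ≤ k+m`. -/
def rPerm (N k m : ℕ) [NeZero N] : Equiv.Perm (Fin N) :=
  ((List.range m).map fun i => t N k (k + 1 + i)).prod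

/-- `c[k,m] = t_{k,k+1} t_{k-1,k+1} ⋯ t_{k-m+1,k+1}`, the (m+1)-cycle with
`c[k,m](j) = j+1` for `k-m+1 ≤ j ≤ k` and `c[k,m](k+1) = k-m+1`. -/
def cPerm (N k m : ℕ) [NeZero N] : Equiv.Perm (Fin N) :=
  ((List.range m).map fun i => t N (k - i) (k + 1)).prod

/-- The conditions that `aᵢ ≤ k < bᵢ` (with all indices in `{1,…,N}`) and that
`ℓ(w t_{a₁ b₁} ⋯ t_{aᵢ bᵢ}) = ℓ(w) + i` for `1 ≤ i ≤ m`. -/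
def StepOK (N k m : ℕ) [NeZero N] (w : Equiv.Perm (Fin N)) (a b : ℕ → ℕ) : Prop :=
  (∀ i, i < m → 1 ≤ a i ∧ a i ≤ k ∧ k < b i ∧ b i ≤ N) ∧
  (∀ i, i ≤ m → len (w * tProd N a b i) = len w + i)

/-- `w →_{r[k,m]} w'`. -/
def RelR (N k m : ℕ) [NeZero N] (w w' : Equiv.Perm (Fin N)) : Prop :=
  ∃ a b : ℕ → ℕ, StepOK N k m w a b ∧ w' = w * tProd N a b m ∧
    (∀ i j, i < m → j < m → i ≠ j → b i ≠ b j)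

/-- `w →_{c[k,m]} w'`. -/
def RelC (N k m : ℕ) [NeZero N] (w w' : Equiv.Perm (Fin N)) : Prop :=
  ∃ a b : ℕ → ℕ, StepOK N k m w a b ∧ w' = w * tProd N a b m ∧
    (∀ i j, i < m → j < m → i ≠ j → a i ≠ a j)

/-- The divided difference operator `∂ᵢ f = (f - sᵢ·f)/(xᵢ - xᵢ₊₁)` (1-indexed `i`);
the quotient is exact, and is recovered here as the (unique) witness of divisibility. -/
noncomputable def divDiff {N : ℕ} [NeZero N] (i : ℕ) (f : MvPolynomial (Fin N) ℤ) :
    MvPolynomial (Fin N) ℤ :=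
  if h : (X (pos N i) - X (pos N (i + 1))) ∣ (f - rename (⇑(t N i (i + 1))) f) then
    h.choose
  else 0

/-- `∂_{a₁} ∘ ⋯ ∘ ∂_{a_p}` applied to `f`, for a word `l = [a₁,…,a_p]`. -/
noncomputable def divDiffWord {N : ℕ} [NeZero N] (l : List ℕ) (f : MvPolynomial (Fin N) ℤ) :
    MvPolynomial (Fin N) ℤ :=
  l.foldr divDiff f

/-- Auxiliary: produce a reduced word for `w` by repeatedly removing a descent. -/
def redWordAux (N : ℕ) [NeZero N] : ℕ → Equiv.Perm (Fin N) → List ℕ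
  | 0, _ => []
  | fuel + 1, w =>
    match ((List.range (N - 1)).map (· + 1)).find? (fun i => decide (val w (i + 1) < val w i)) with
    | none => []
    | some i => redWordAux N fuel (w * t N i (i + 1)) ++ [i]

/-- A canonical reduced word `(a₁,…,a_p)` for `w`, i.e. `w = s_{a₁} ⋯ s_{a_p}` with `p = ℓ(w)`. -/
def redWord (N : ℕ) [NeZero N] (w : Equiv.Perm (Fin N)) : List ℕ :=
  redWordAux N (N * N) w

/-- The staircase monomial `x₁^{N-1} x₂^{N-2} ⋯ x_{N-1}`. -/
noncomputable def staircase (N : ℕ) : MvPolynomial (Fin N) ℤ :=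
  ∏ i : Fin N, X i ^ (N - 1 - (i : ℕ))

/-- The Schubert polynomial `𝔖_w = ∂_{w⁻¹w₀}(x₁^{N-1} ⋯ x_{N-1})`. -/
noncomputable def schubertPoly (N : ℕ) [NeZero N] (w : Equiv.Perm (Fin N)) :
    MvPolynomial (Fin N) ℤ :=
  divDiffWord (redWord N (w⁻¹ * w0 N)) (staircase N)

/-- The ideal of `Rₙ` generated by the symmetric polynomials with zero constant term. -/
noncomputable def symIdeal (N : ℕ) : Ideal (MvPolynomial (Fin N) ℤ) :=
  Ideal.span {f : MvPolynomial (Fin N) ℤ | f.IsSymmetric ∧ constantCoeff f = 0}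

/-- The ring `Hₙ = Rₙ/𝒮`. -/
abbrev HRing (N : ℕ) := MvPolynomial (Fin N) ℤ ⧸ symIdeal N

/-- The class of the Schubert polynomial `𝔖_w` in `Hₙ`. -/
noncomputable def SS (N : ℕ) [NeZero N] (w : Equiv.Perm (Fin N)) : HRing N :=
  Ideal.Quotient.mk (symIdeal N) (schubertPoly N w)

/-- The complete homogeneous symmetric polynomial of degree `m` in `x₁,…,x_k`. -/
noncomputable def hPoly (N k m : ℕ) : MvPolynomial (Fin N) ℤ :=
  ∑ s ∈ (Finset.univ.filter fun i : Fin N => (i : ℕ) < k).sym m,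
    (Multiset.map X (s : Multiset (Fin N))).prod

/-- The elementary symmetric polynomial of degree `m` in `x₁,…,x_k`. -/
noncomputable def ePoly (N k m : ℕ) : MvPolynomial (Fin N) ℤ :=
  ∑ s ∈ (Finset.univ.filter fun i : Fin N => (i : ℕ) < k).powersetCard m, ∏ i ∈ s, X i

/-- Covering relation of the `k`-Bruhat order. -/
def kCover (N k : ℕ) [NeZero N] (w w' : Equiv.Perm (Fin N)) : Prop :=
  ∃ a b : ℕ, 1 ≤ a ∧ a ≤ k ∧ k < b ∧ b ≤ N ∧ w' = w * t N a b ∧ len w' = len w + 1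

/-- The (strict) `k`-Bruhat order `<ₖ`. -/
def kBruhat (N k : ℕ) [NeZero N] : Equiv.Perm (Fin N) → Equiv.Perm (Fin N) → Prop :=
  Relation.TransGen (kCover N k)

/-- The label `w⁽ⁱ⁺¹⁾(a_{i+1})` (0-indexed `i`) of the `(i+1)`-st step of a path. -/
def label {N : ℕ} [NeZero N] (w : Equiv.Perm (Fin N)) (a b : ℕ → ℕ) (i : ℕ) : ℕ :=
  val (w * tProd N a b (i + 1)) (a i)

/-- `(a,b)` encodes a path of length `m` in the `k`-Bruhat order from `w` to `w'`
(normalized so that `a i = b i = 0` for `i ≥ m`, making the encoding unique). -/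
def PathWit (N k m : ℕ) [NeZero N] (w w' : Equiv.Perm (Fin N))
    (ab : (ℕ → ℕ) × (ℕ → ℕ)) : Prop :=
  StepOK N k m w ab.1 ab.2 ∧ w' = w * tProd N ab.1 ab.2 m ∧
    ∀ i, m ≤ i → ab.1 i = 0 ∧ ab.2 i = 0

/-- Paths of length `m` in the `k`-Bruhat order from `w` to `w'` with strictly
increasing labels. -/
def IncPaths (N k m : ℕ) [NeZero N] (w w' : Equiv.Perm (Fin N)) :
    Set ((ℕ → ℕ) × (ℕ → ℕ)) :=
  {ab | PathWit N k m w w' ab ∧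
    ∀ i j, i < j → j < m → label w ab.1 ab.2 i < label w ab.1 ab.2 j}

/-- Paths of length `m` in the `k`-Bruhat order from `w` to `w'` with strictly
decreasing labels. -/
def DecPaths (N k m : ℕ) [NeZero N] (w w' : Equiv.Perm (Fin N)) :
    Set ((ℕ → ℕ) × (ℕ → ℕ)) :=
  {ab | PathWit N k m w w' ab ∧
    ∀ i j, i < j → j < m → label w ab.1 ab.2 j < label w ab.1 ab.2 i}


/-- The cycle `(x₁ x₂ … x_r)` (sending `x₁ ↦ x₂ ↦ ⋯ ↦ x_r ↦ x₁`), as a product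
of transpositions. -/
def cycleList (N : ℕ) [NeZero N] (l : List ℕ) : Equiv.Perm (Fin N) :=
  ((l.zip l.tail).map fun p => t N p.1 p.2).prod

/-- The Grassmannian permutation `h[k;p,q]` of descent `k` and hook shape `(p,1^{q-1})`:
the `(p+q)`-cycle `(k-q+1  k-q+2 … k  k+p  k+p-1 … k+1)`. -/
def hookPerm (N k p q : ℕ) [NeZero N] : Equiv.Perm (Fin N) :=
  cycleList N (((List.range q).map fun i => k - q + 1 + i) ++
    ((List.range p).reverse.map fun i => k + 1 + i))

/-- `w|ₚ ∈ S_{N-1}`: delete row `p` and column `w(p)` from the permutation matrix of `w`. -/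
def drop {N : ℕ} (w : Equiv.Perm (Fin (N + 1))) (p : Fin (N + 1)) : Equiv.Perm (Fin N) :=
  Equiv.removeNone (((finSuccEquiv' p).symm.trans (w : Fin (N + 1) ≃ Fin (N + 1))).trans
    (finSuccEquiv' (w p)))

/-- `lam` is a partition with at most `k` parts (1-indexed parts `lam 1 ≥ lam 2 ≥ ⋯`,
normalized by `lam 0 = 0`). -/
def IsPartFun (k : ℕ) (lam : ℕ → ℕ) : Prop :=
  lam 0 = 0 ∧ (∀ j, 1 ≤ j → lam (j + 1) ≤ lam j) ∧ ∀ j, k < j → lam j = 0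

/-- `h_d(x₁,…,x_k)` for an integer `d`, with `h_d = 0` for `d < 0`. -/
noncomputable def hPolyZ (N k : ℕ) (d : ℤ) : MvPolynomial (Fin N) ℤ :=
  if 0 ≤ d then hPoly N k d.toNat else 0

/-- The Schur polynomial `s_λ(x₁,…,x_k)`, via the Jacobi–Trudi determinant
`det(h_{λᵢ+j-i})_{1 ≤ i,j ≤ k}`. -/
noncomputable def schurPoly (N k : ℕ) (lam : ℕ → ℕ) : MvPolynomial (Fin N) ℤ :=
  (Matrix.of fun i j : Fin k =>
    hPolyZ N k ((lam ((i : ℕ) + 1) : ℤ) + (j : ℕ) - (i : ℕ))).det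

/-- `r_j = #{i : aᵢ = j}` (with `i` ranging over `0,…,m-1`, 0-indexed). -/
def rJ (a : ℕ → ℕ) (m j : ℕ) : ℕ := ((Finset.range m).filter fun i => a i = j).card

/-- `μ_j = r_{j+1} + ⋯ + r_k`. -/
def muJ (a : ℕ → ℕ) (m k j : ℕ) : ℕ :=
  if j = 0 then 0 else ∑ j' ∈ Finset.Icc (j + 1) k, rJ a m j'

/-- `λ_j = μ_j + r_j`. -/
def lamJ (a : ℕ → ℕ) (m k j : ℕ) : ℕ :=
  if j = 0 then 0 else muJ a m k j + rJ a m j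

/-- `d_j = #{i : bᵢ = N+1-j}` (with `i` ranging over `0,…,m-1`, 0-indexed). -/
def dJ (b : ℕ → ℕ) (m N j : ℕ) : ℕ :=
  ((Finset.range m).filter fun i => b i = N + 1 - j).card

/-- `μ′_j = d_{j+1} + ⋯ + d_{N-k}`. -/
def muJ' (b : ℕ → ℕ) (m N k j : ℕ) : ℕ :=
  if j = 0 then 0 else ∑ j' ∈ Finset.Icc (j + 1) (N - k), dJ b m N j'

/-- `λ′_j = μ′_j + d_j`. -/
def lamJ' (b : ℕ → ℕ) (m N k j : ℕ) : ℕ :=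
  if j = 0 then 0 else muJ' b m N k j + dJ b m N j

/-- The conjugate (transpose) partition: `νᵗ_j = #{i : νᵢ ≥ j}`, for `ν` with at
most `k` parts. -/
def conjPart (k : ℕ) (nu : ℕ → ℕ) (j : ℕ) : ℕ :=
  if j = 0 then 0 else ((Finset.Icc 1 k).filter fun i => j ≤ nu i).card

/-- `wv` is the Grassmannian permutation of descent `k` and shape `nu`:
`wv(j) = j + ν_{k+1-j}` for `1 ≤ j ≤ k`, and `wv` is increasing on `{k+1,…,N}`. -/
def IsGrassOf (N k : ℕ) [NeZero N] (nu : ℕ → ℕ) (wv : Equiv.Perm (Fin N)) : Prop :=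
  (∀ j, 1 ≤ j → j ≤ k → val wv j = j + nu (k + 1 - j)) ∧
  (∀ j, k < j → j < N → val wv j < val wv (j + 1))

/-- Paths of length `m` in the `k`-Bruhat order from `w` to `w'` whose labels
increase strictly for the first `p` steps and decrease strictly thereafter
(positions `p, p+1, …, m` being decreasing, 1-indexed). -/
def IncDecPaths (N k m p : ℕ) [NeZero N] (w w' : Equiv.Perm (Fin N)) :
    Set ((ℕ → ℕ) × (ℕ → ℕ)) :=
  {ab | PathWit N k m w w' ab ∧
    (∀ i j, i < j → j < p → label w ab.1 ab.2 i < label w ab.1 ab.2 j) ∧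
    (∀ i j, p - 1 ≤ i → i < j → j < m → label w ab.1 ab.2 j < label w ab.1 ab.2 i)}

/-- Paths of length `m` in the `k`-Bruhat order from `w` to `w'` whose labels
decrease strictly for the first `q` steps and increase strictly thereafter. -/
def DecIncPaths (N k m q : ℕ) [NeZero N] (w w' : Equiv.Perm (Fin N)) :
    Set ((ℕ → ℕ) × (ℕ → ℕ)) :=
  {ab | PathWit N k m w w' ab ∧
    (∀ i j, i < j → j < q → label w ab.1 ab.2 j < label w ab.1 ab.2 i) ∧
    (∀ i j, q - 1 ≤ i → i < j → j < m → label w ab.1 ab.2 i < label w ab.1 ab.2 j)}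


/-!
The automorphism is induced by `ψ : xᵢ ↦ -x_{n+1-i}`, which preserves the ideal of positive
symmetric polynomials and satisfies `ψ ∂ᵢ = ∂_{n-i} ψ`. Conjugation by `w₀` replaces each letter `i`
of a reduced word by `n - i`, and by Matsumoto's theorem `∂_w` does not depend on the reduced word,
so `ψ ∂_w = ∂_{w₀ww₀} ψ`. As every `∂ᵢ` preserves the ideal, it remains to see that `ψ` fixes the
staircase monomial `x^δ` modulo the ideal.

Modulo the ideal `∏ (T + xᵢ) = T ^ n`, from which one deduces that every variable annihilates `x^δ`.
Applying `∂ᵢ` to `xᵢ x^δ` then gives `x^δ + sᵢ x^δ ≡ 0`, hence `w x^δ ≡ sgn(w) x^δ` for all `w`.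
Finally `ψ x^δ = sgn(w₀) w₀ x^δ`, because both `sgn(w₀)` and the sign produced by `ψ` are
`(-1) ^ (n choose 2)`.
-/

/-! ### Divided differences -/

section DividedDifference

variable {σ R : Type*} [CommRing R]

lemma X_sub_X_ne_zero [Nontrivial R] {a b : σ} (h : a ≠ b) :
    (X a - X b : MvPolynomial σ R) ≠ 0 :=
  sub_ne_zero.2 (X_injective.ne h)

variable [DecidableEq σ]

lemma X_sub_X_dvd_sub_rename_swap (a b : σ) (f : MvPolynomial σ R) :
    X a - X b ∣ f - rename (swap a b) f := by
  let q := Ideal.Quotient.mkₐ R (Ideal.span {(X a - X b : MvPolynomial σ R)})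
  have hq : q (X a) = q (X b) :=
    Ideal.Quotient.eq.2 (Ideal.mem_span_singleton_self _)
  have hswap : q.comp (rename (swap a b)) = q := by
    ext c
    rw [AlgHom.comp_apply, rename_X, swap_apply_def]
    split_ifs with hca hcb
    · rw [hca, hq]
    · rw [hcb, hq]
    · rfl
  rw [← Ideal.mem_span_singleton]
  exact Ideal.Quotient.eq.1 (DFunLike.congr_fun hswap f).symm

variable [IsDomain R]

/-- The divided difference `f ↦ (f - (a b) • f) / (x_a - x_b)`, the exact quotient being recovered
as a witness of divisibility. -/
noncomputable def dividedDifference {a b : σ} (h : a ≠ b) : Module.End R (MvPolynomial σ R) where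
  toFun f := (X_sub_X_dvd_sub_rename_swap a b f).choose
  map_add' f g := mul_left_cancel₀ (X_sub_X_ne_zero (R := R) h) <| by
    rw [mul_add, ← (X_sub_X_dvd_sub_rename_swap a b f).choose_spec,
      ← (X_sub_X_dvd_sub_rename_swap a b g).choose_spec,
      ← (X_sub_X_dvd_sub_rename_swap a b (f + g)).choose_spec, map_add]
    ring
  map_smul' r f := mul_left_cancel₀ (X_sub_X_ne_zero (R := R) h) <| by
    rw [RingHom.id_apply, mul_smul_comm, ← (X_sub_X_dvd_sub_rename_swap a b f).choose_spec,
      ← (X_sub_X_dvd_sub_rename_swap a b (r • f)).choose_spec, map_smul, smul_sub]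

lemma X_sub_X_mul_dividedDifference {a b : σ} (h : a ≠ b) (f : MvPolynomial σ R) :
    (X a - X b) * dividedDifference h f = f - rename (swap a b) f :=
  (X_sub_X_dvd_sub_rename_swap a b f).choose_spec.symm

lemma dividedDifference_eq {a b : σ} (h : a ≠ b) {f g : MvPolynomial σ R}
    (hg : (X a - X b) * g = f - rename (swap a b) f) : dividedDifference h f = g :=
  mul_left_cancel₀ (X_sub_X_ne_zero h) ((X_sub_X_mul_dividedDifference h f).trans hg.symm)

lemma dividedDifference_symm {a b : σ} (h : a ≠ b) (f : MvPolynomial σ R) :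
    dividedDifference h.symm f = -dividedDifference h f := by
  apply dividedDifference_eq
  rw [swap_comm, ← X_sub_X_mul_dividedDifference h f]
  ring

lemma dividedDifference_mul {a b : σ} (h : a ≠ b) (f g : MvPolynomial σ R) :
    dividedDifference h (f * g) =
      dividedDifference h f * g + rename (swap a b) f * dividedDifference h g := by
  apply dividedDifference_eq
  rw [map_mul]
  linear_combination g * X_sub_X_mul_dividedDifference h f +
    rename (swap a b) f * X_sub_X_mul_dividedDifference h g

lemma dividedDifference_eq_zero {a b : σ} (h : a ≠ b) {f : MvPolynomial σ R}
    (hf : rename (swap a b) f = f) : dividedDifference h f = 0 :=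
  dividedDifference_eq h (by rw [hf, mul_zero, sub_self])

lemma rename_dividedDifference {τ : Type*} [DecidableEq τ] (e : σ ≃ τ) {a b : σ} (h : a ≠ b)
    (f : MvPolynomial σ R) :
    rename e (dividedDifference h f) = dividedDifference (e.injective.ne h) (rename e f) := by
  refine (dividedDifference_eq _ ?_).symm
  have hswap : swap (e a) (e b) ∘ e = e ∘ swap a b := by
    ext c
    simp [e.injective.map_swap]
  rw [rename_rename, hswap, ← rename_rename, ← map_sub, ← X_sub_X_mul_dividedDifference h,
    map_mul, map_sub, rename_X, rename_X]

lemma rename_swap_dividedDifference {a b : σ} (h : a ≠ b) (f : MvPolynomial σ R) :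
    rename (swap a b) (dividedDifference h f) = dividedDifference h f := by
  refine (dividedDifference_eq h ?_).symm
  have hf := congrArg (rename (swap a b)) (X_sub_X_mul_dividedDifference h f)
  simp only [map_mul, map_sub, rename_X, swap_apply_left, swap_apply_right, rename_rename,
    ← Perm.coe_mul, swap_mul_self, Perm.coe_one, rename_id_apply] at hf
  linear_combination -hf

lemma dividedDifference_comm {a b c d : σ} (hab : a ≠ b) (hcd : c ≠ d) (hac : a ≠ c) (had : a ≠ d)
    (hbc : b ≠ c) (hbd : b ≠ d) (f : MvPolynomial σ R) :
    dividedDifference hab (dividedDifference hcd f) =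
      dividedDifference hcd (dividedDifference hab f) := by
  apply dividedDifference_eq
  have hfix : rename (swap c d) (X a - X b : MvPolynomial σ R) = X a - X b := by
    rw [map_sub, rename_X, rename_X, swap_apply_of_ne_of_ne hac had, swap_apply_of_ne_of_ne hbc hbd]
  have hren : rename (swap a b) (dividedDifference hcd f) =
      dividedDifference hcd (rename (swap a b) f) := by
    rw [rename_dividedDifference]
    congr 2
    · rw [swap_apply_of_ne_of_ne hac.symm hbc.symm]
    · rw [swap_apply_of_ne_of_ne had.symm hbd.symm]
  calc (X a - X b) * dividedDifference hcd (dividedDifference hab f)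
      = dividedDifference hcd ((X a - X b) * dividedDifference hab f) := by
        rw [dividedDifference_mul, dividedDifference_eq_zero hcd hfix, hfix, zero_mul, zero_add]
    _ = dividedDifference hcd f - rename (swap a b) (dividedDifference hcd f) := by
        rw [X_sub_X_mul_dividedDifference, map_sub, hren]

lemma vandermonde_mul_dividedDifference {a b c : σ} (hab : a ≠ b) (hbc : b ≠ c) (hac : a ≠ c)
    (f : MvPolynomial σ R) :
    (X a - X b) * (X a - X c) * (X b - X c) *
        dividedDifference hab (dividedDifference hbc (dividedDifference hab f)) =
      f - rename (swap a b) f - rename (swap b c) f + rename (swap b c) (rename (swap a b) f) +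
        rename (swap a b) (rename (swap b c) f) - rename (swap a c) f := by
  have hperm : swap a b * swap b c * swap a b = swap a c := by
    rw [swap_comm a b, swap_comm b c, swap_mul_swap_mul_swap hbc.symm hac.symm]
  set s := swap a b
  set t := swap b c
  set g := dividedDifference hab f
  set k := dividedDifference hbc g
  have hca : s c = c := swap_apply_of_ne_of_ne hac.symm hbc.symm
  have hta : t a = a := swap_apply_of_ne_of_ne hab hac
  have hsts : rename s (rename t (rename s f)) = rename (swap a c) f := by
    rw [rename_rename, rename_rename, ← hperm]
    rfl
  have hg : (X a - X b) * g = f - rename s f := X_sub_X_mul_dividedDifference hab f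
  have htg : (X a - X c) * rename t g = rename t f - rename t (rename s f) := by
    simpa only [map_mul, map_sub, rename_X, hta, t, swap_apply_left] using congrArg (rename t) hg
  have hstg : (X b - X c) * rename s (rename t g) =
      rename s (rename t f) - rename s (rename t (rename s f)) := by
    simpa only [map_mul, map_sub, rename_X, hca, s, swap_apply_left] using congrArg (rename s) htg
  have hsk : (X a - X c) * rename s k = g - rename s (rename t g) := by
    have hk := congrArg (rename s) (X_sub_X_mul_dividedDifference hbc g)
    rwa [map_mul, map_sub, map_sub, rename_X, rename_X, hca, rename_swap_dividedDifference,
      swap_apply_right] at hk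
  rw [← hsts]
  linear_combination (X a - X c) * (X b - X c) * X_sub_X_mul_dividedDifference hab k +
    (X a - X c) * X_sub_X_mul_dividedDifference hbc g - (X b - X c) * hsk + hg - htg + hstg

lemma dividedDifference_braid {a b c : σ} (hab : a ≠ b) (hbc : b ≠ c) (hac : a ≠ c)
    (f : MvPolynomial σ R) :
    dividedDifference hab (dividedDifference hbc (dividedDifference hab f)) =
      dividedDifference hbc (dividedDifference hab (dividedDifference hbc f)) := by
  have hne := mul_ne_zero (mul_ne_zero (X_sub_X_ne_zero (R := R) hab) (X_sub_X_ne_zero hac))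
    (X_sub_X_ne_zero hbc)
  apply mul_left_cancel₀ hne
  -- The alternating sum in `vandermonde_mul_dividedDifference` is invariant under `a ↔ c`.
  have hrev := vandermonde_mul_dividedDifference hbc.symm hab.symm hac.symm f
  simp only [dividedDifference_symm hab, dividedDifference_symm hbc, map_neg, swap_comm c b,
    swap_comm b a, swap_comm c a] at hrev
  linear_combination vandermonde_mul_dividedDifference hab hbc hac f - hrev

lemma dividedDifference_mem_span {S : Set (MvPolynomial σ R)} {a b : σ} (h : a ≠ b)
    (hS : ∀ p ∈ S, rename (swap a b) p = p) {f : MvPolynomial σ R} (hf : f ∈ Ideal.span S) :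
    dividedDifference h f ∈ Ideal.span S := by
  induction hf using Submodule.span_induction with
  | mem p hp =>
    rw [dividedDifference_eq_zero h (hS p hp)]
    exact zero_mem _
  | zero => rw [map_zero]; exact zero_mem _
  | add p q _ _ hp hq => rw [map_add]; exact add_mem hp hq
  | smul r p hp_mem hp =>
    rw [smul_eq_mul, dividedDifference_mul]
    exact add_mem (Ideal.mul_mem_left _ _ hp_mem) (Ideal.mul_mem_left _ _ hp)

end DividedDifference

/-! ### Reduced words and Matsumoto's theorem -/

section ReducedWords

variable {n : ℕ}

/-- The simple transposition `sᵢ`, exchanging the `i`-th position (counted from `0`) and the next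
one. -/
def simpleTransposition (i : Fin n) : Perm (Fin (n + 1)) :=
  swap i.castSucc i.succ

/-- `i` is a descent of `w` if `w` decreases from the `i`-th position (counted from `0`) to the
next one. -/
def IsDescent (w : Perm (Fin (n + 1))) (i : Fin n) : Prop :=
  w i.succ < w i.castSucc

/-- The word `l` in the simple transpositions is a reduced word of `w`. Letters are elements of
`Fin n`, so they are one less than those of the paper. -/
def IsReducedWord (l : List (Fin n)) (w : Perm (Fin (n + 1))) : Prop :=
  (l.map simpleTransposition).prod = w ∧ l.length = len w

/-- A family in a monoid satisfying the braid relations of the symmetric group on `n + 1` letters,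
written for ordered pairs of indices. -/
structure BraidRelations {M : Type*} [Monoid M] (T : Fin n → M) : Prop where
  commute : ∀ ⦃i j : Fin n⦄, (i : ℕ) + 1 < j → T i * T j = T j * T i
  braid : ∀ ⦃i j : Fin n⦄, (i : ℕ) + 1 = j → T i * T j * T i = T j * T i * T j

lemma simpleTransposition_castSucc (i : Fin n) : simpleTransposition i i.castSucc = i.succ :=
  swap_apply_left _ _

lemma simpleTransposition_succ (i : Fin n) : simpleTransposition i i.succ = i.castSucc :=
  swap_apply_right _ _

lemma simpleTransposition_of_ne_of_ne {i : Fin n} {p : Fin (n + 1)} (h : p ≠ i.castSucc)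
    (h' : p ≠ i.succ) : simpleTransposition i p = p :=
  swap_apply_of_ne_of_ne h h'

lemma mul_simpleTransposition_cancel (w : Perm (Fin (n + 1))) (i : Fin n) :
    w * simpleTransposition i * simpleTransposition i = w :=
  mul_swap_mul_self _ _ _

lemma simpleTransposition_lt_iff {i : Fin n} {p q : Fin (n + 1)}
    (h : ¬(p = i.castSucc ∧ q = i.succ)) (h' : ¬(p = i.succ ∧ q = i.castSucc)) :
    simpleTransposition i p < simpleTransposition i q ↔ p < q := by
  simp only [simpleTransposition, swap_apply_def, Fin.ext_iff, Fin.val_castSucc, Fin.val_succ,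
    Fin.lt_def] at *
  split_ifs <;> simp only [Fin.val_castSucc, Fin.val_succ] <;> omega

lemma len_one : len (1 : Perm (Fin n)) = 0 := by
  rw [len, Finset.card_eq_zero]
  exact Finset.filter_false_of_mem fun _ _ h => h.1.not_gt h.2

lemma len_mul_simpleTransposition_of_isDescent {w : Perm (Fin (n + 1))} {i : Fin n}
    (h : IsDescent w i) :
    len (w * simpleTransposition i) + 1 = len w := by
  have hlt : i.castSucc < i.succ := Fin.castSucc_lt_succ
  have hmem : (i.castSucc, i.succ) ∈
      Finset.univ.filter fun p : Fin (n + 1) × Fin (n + 1) => p.1 < p.2 ∧ w p.2 < w p.1 :=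
    Finset.mem_filter.2 ⟨Finset.mem_univ _, hlt, h⟩
  rw [len, len, ← Finset.card_erase_add_one hmem]
  refine congrArg (· + 1) (Finset.card_equiv
    ((simpleTransposition i).prodCongr (simpleTransposition i)) fun ⟨p, q⟩ => ?_)
  simp only [Finset.mem_filter, Finset.mem_univ, true_and, Finset.mem_erase, prodCongr_apply,
    Prod.map_apply, ne_eq, Prod.mk.injEq]
  simp only [Perm.mul_apply]
  by_cases hasc : p = i.castSucc ∧ q = i.succ
  · obtain ⟨rfl, rfl⟩ := hasc
    simp only [simpleTransposition_castSucc, simpleTransposition_succ]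
    exact ⟨fun hp => absurd hp.2 h.not_gt, fun hp => absurd hp.2.1 hlt.not_gt⟩
  by_cases hdesc : p = i.succ ∧ q = i.castSucc
  · obtain ⟨rfl, rfl⟩ := hdesc
    rw [simpleTransposition_castSucc, simpleTransposition_succ]
    exact ⟨fun hp => absurd hp.1 hlt.not_gt, fun hp => absurd ⟨rfl, rfl⟩ hp.1⟩
  have hne : ¬(simpleTransposition i p = i.castSucc ∧ simpleTransposition i q = i.succ) := by
    rwa [← eq_symm_apply, ← eq_symm_apply, simpleTransposition, symm_swap, swap_apply_left,
      swap_apply_right]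
  rw [simpleTransposition_lt_iff hasc hdesc]
  exact (and_iff_right hne).symm

lemma isDescent_mul_simpleTransposition {w : Perm (Fin (n + 1))} {i : Fin n}
    (h : ¬IsDescent w i) : IsDescent (w * simpleTransposition i) i := by
  rw [IsDescent, Perm.mul_apply, Perm.mul_apply, simpleTransposition_succ,
    simpleTransposition_castSucc]
  exact (not_lt.1 h).lt_of_ne (w.injective.ne Fin.castSucc_lt_succ.ne)

lemma len_mul_simpleTransposition_of_not_isDescent {w : Perm (Fin (n + 1))} {i : Fin n}
    (h : ¬IsDescent w i) : len (w * simpleTransposition i) = len w + 1 := by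
  rw [← len_mul_simpleTransposition_of_isDescent (isDescent_mul_simpleTransposition h),
    mul_simpleTransposition_cancel]

lemma len_prod_simpleTransposition_le (l : List (Fin n)) :
    len (l.map simpleTransposition).prod ≤ l.length := by
  induction l using List.reverseRecOn with
  | nil => exact len_one.le
  | append_singleton l i ih =>
    rw [List.map_append, List.prod_append, List.map_singleton, List.prod_singleton,
      List.length_append, List.length_singleton]
    by_cases h : IsDescent (l.map simpleTransposition).prod i
    · have := len_mul_simpleTransposition_of_isDescent h
      omega
    · have := len_mul_simpleTransposition_of_not_isDescent h
      omega

lemma isReducedWord_append_singleton {l : List (Fin n)} {w : Perm (Fin (n + 1))} {i : Fin n} :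
    IsReducedWord (l ++ [i]) w ↔
      IsDescent w i ∧ IsReducedWord l (w * simpleTransposition i) := by
  simp only [IsReducedWord, List.map_append, List.prod_append, List.map_singleton,
    List.prod_singleton, List.length_append, List.length_singleton]
  constructor
  · rintro ⟨rfl, hlen⟩
    rw [mul_simpleTransposition_cancel]
    have hle := len_prod_simpleTransposition_le l
    have hdesc : IsDescent ((l.map simpleTransposition).prod * simpleTransposition i) i := by
      by_contra h
      have hlen' := len_mul_simpleTransposition_of_not_isDescent h
      rw [mul_simpleTransposition_cancel] at hlen'
      omega
    have hlen' := len_mul_simpleTransposition_of_isDescent hdesc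
    rw [mul_simpleTransposition_cancel] at hlen'
    exact ⟨hdesc, rfl, by omega⟩
  · rintro ⟨hdesc, hprod, hlen⟩
    rw [hprod, hlen, mul_simpleTransposition_cancel]
    exact ⟨rfl, len_mul_simpleTransposition_of_isDescent hdesc⟩

lemma eq_one_of_forall_not_isDescent {w : Perm (Fin (n + 1))} (h : ∀ i, ¬IsDescent w i) :
    w = 1 := by
  have hmono : StrictMono w := Fin.strictMono_iff_lt_succ.2 fun i =>
    (not_lt.1 (h i)).lt_of_ne (w.injective.ne Fin.castSucc_lt_succ.ne)
  exact DFunLike.coe_injective hmono.eq_id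

lemma isReducedWord_nil_iff {w : Perm (Fin (n + 1))} :
    IsReducedWord [] w ↔ w = 1 := by
  constructor
  · exact fun h => h.1.symm
  · rintro rfl
    exact ⟨rfl, len_one.symm⟩

lemma pos_succ (i : Fin n) : pos (n + 1) ((i : ℕ) + 1) = i.castSucc :=
  Fin.ext (Nat.mod_eq_of_lt (by omega))

lemma pos_succ_succ (i : Fin n) : pos (n + 1) ((i : ℕ) + 1 + 1) = i.succ :=
  Fin.ext (Nat.mod_eq_of_lt (by omega))

lemma exists_isReducedWord_redWordAux {w : Perm (Fin (n + 1))} {k : ℕ} (hk : len w ≤ k) :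
    ∃ l, IsReducedWord l w ∧ redWordAux (n + 1) k w = l.map fun i : Fin n => (i : ℕ) + 1 := by
  induction k generalizing w with
  | zero =>
    refine ⟨[], isReducedWord_nil_iff.2 (eq_one_of_forall_not_isDescent fun i hi => ?_), rfl⟩
    have := len_mul_simpleTransposition_of_isDescent hi
    omega
  | succ k ih =>
    rw [redWordAux]
    split
    · next hnone =>
      refine ⟨[], isReducedWord_nil_iff.2 (eq_one_of_forall_not_isDescent fun i hi => ?_), rfl⟩
      have hval := List.find?_eq_none.1 hnone (i + 1)
        (List.mem_map_of_mem (List.mem_range.2 i.isLt))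
      simp only [val, pos_succ, pos_succ_succ, decide_eq_true_eq] at hval
      exact hval (Nat.succ_lt_succ hi)
    · next a hsome =>
      obtain ⟨b, hb, rfl⟩ := List.mem_map.1 (List.mem_of_find?_eq_some hsome)
      obtain ⟨i, rfl⟩ : ∃ i : Fin n, (i : ℕ) = b := ⟨⟨b, List.mem_range.1 hb⟩, rfl⟩
      have hval := List.find?_some hsome
      simp only [val, pos_succ, pos_succ_succ, decide_eq_true_eq] at hval
      have hi : IsDescent w i := Nat.lt_of_succ_lt_succ hval
      have hlen := len_mul_simpleTransposition_of_isDescent hi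
      obtain ⟨l, hl, hl'⟩ := ih (w := w * simpleTransposition i) (by omega)
      refine ⟨l ++ [i], isReducedWord_append_singleton.2 ⟨hi, hl⟩, ?_⟩
      rw [t, pos_succ, pos_succ_succ, List.map_append, ← hl']
      rfl

lemma exists_isReducedWord_redWord (w : Perm (Fin (n + 1))) :
    ∃ l, IsReducedWord l w ∧ redWord (n + 1) w = l.map fun i : Fin n => (i : ℕ) + 1 := by
  refine exists_isReducedWord_redWordAux ((Finset.card_filter_le _ _).trans_eq ?_)
  rw [Finset.card_univ, Fintype.card_prod, Fintype.card_fin]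

lemma exists_isReducedWord (w : Perm (Fin (n + 1))) : ∃ l, IsReducedWord l w :=
  (exists_isReducedWord_redWord w).imp fun _ h => h.1

lemma braidRelations_simpleTransposition :
    BraidRelations (simpleTransposition : Fin n → Perm (Fin (n + 1))) where
  commute i j hij := by
    refine (Perm.disjoint_swap_swap ?_).commute.eq
    simp only [List.nodup_cons, List.mem_cons, List.not_mem_nil, Fin.ext_iff, Fin.val_castSucc,
      Fin.val_succ, List.nodup_nil, not_false_eq_true, and_true, or_false]
    omega
  braid i j hij := by
    have hj : j.castSucc = i.succ := Fin.ext hij.symm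
    have hac : i.castSucc ≠ j.succ := (Fin.castSucc_lt_succ.trans (hj ▸ Fin.castSucc_lt_succ)).ne
    have hab : i.castSucc ≠ i.succ := Fin.castSucc_lt_succ.ne
    have hbc : i.succ ≠ j.succ := hj ▸ Fin.castSucc_lt_succ.ne
    rw [simpleTransposition, simpleTransposition, hj, swap_mul_swap_mul_swap hab hac,
      swap_comm i.castSucc i.succ, swap_comm i.succ j.succ,
      swap_mul_swap_mul_swap hbc.symm hac.symm, swap_comm]

lemma exists_isReducedWord_of_commute {w : Perm (Fin (n + 1))} {i j : Fin n}
    (hi : IsDescent w i) (hj : IsDescent w j) (hij : (i : ℕ) + 1 < j) :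
    ∃ l, IsReducedWord (l ++ [j] ++ [i]) w ∧ IsReducedWord (l ++ [i] ++ [j]) w := by
  obtain ⟨l, hl⟩ := exists_isReducedWord (w * simpleTransposition i * simpleTransposition j)
  have hcomm := (braidRelations_simpleTransposition (n := n)).commute hij
  refine ⟨l, ?_, ?_⟩
  · rw [isReducedWord_append_singleton, isReducedWord_append_singleton]
    refine ⟨hi, ?_, hl⟩
    rwa [IsDescent, Perm.mul_apply, Perm.mul_apply,
      simpleTransposition_of_ne_of_ne (p := j.succ), simpleTransposition_of_ne_of_ne] <;>
    simp only [ne_eq, Fin.ext_iff, Fin.val_castSucc, Fin.val_succ] <;> omega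
  · rw [isReducedWord_append_singleton, isReducedWord_append_singleton]
    refine ⟨hj, ?_, by rwa [mul_assoc, ← hcomm, ← mul_assoc]⟩
    rwa [IsDescent, Perm.mul_apply, Perm.mul_apply,
      simpleTransposition_of_ne_of_ne (p := i.succ), simpleTransposition_of_ne_of_ne] <;>
    simp only [ne_eq, Fin.ext_iff, Fin.val_castSucc, Fin.val_succ] <;> omega

lemma exists_isReducedWord_of_braid {w : Perm (Fin (n + 1))} {i j : Fin n}
    (hi : IsDescent w i) (hj : IsDescent w j) (hij : (i : ℕ) + 1 = j) :
    ∃ l, IsReducedWord (l ++ [i] ++ [j] ++ [i]) w ∧ IsReducedWord (l ++ [j] ++ [i] ++ [j]) w := by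
  obtain ⟨l, hl⟩ := exists_isReducedWord
    (w * (simpleTransposition i * simpleTransposition j * simpleTransposition i))
  have hbraid := (braidRelations_simpleTransposition (n := n)).braid hij
  have hmid : j.castSucc = i.succ := Fin.ext hij.symm
  have hij_fix : simpleTransposition i j.succ = j.succ := by
    apply simpleTransposition_of_ne_of_ne <;>
    simp only [ne_eq, Fin.ext_iff, Fin.val_castSucc, Fin.val_succ] <;> omega
  have hji_fix : simpleTransposition j i.castSucc = i.castSucc := by
    apply simpleTransposition_of_ne_of_ne <;>
    simp only [ne_eq, Fin.ext_iff, Fin.val_castSucc, Fin.val_succ] <;> omega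
  have hj_mid : simpleTransposition j i.succ = j.succ := hmid ▸ simpleTransposition_castSucc j
  rw [IsDescent, hmid] at hj
  have hij_lt := hj.trans hi
  refine ⟨l, ?_, ?_⟩ <;>
  simp only [isReducedWord_append_singleton, IsDescent, Perm.mul_apply, hmid, hij_fix, hji_fix,
    hj_mid, simpleTransposition_castSucc, simpleTransposition_succ]
  · exact ⟨hi, hij_lt, hj, by simpa only [mul_assoc] using hl⟩
  · exact ⟨hj, hij_lt, hi, by simpa only [hbraid, mul_assoc] using hl⟩

/-- The words produced here are the two reduced words of the longest element of the parabolic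
subgroup generated by `sᵢ` and `sⱼ`, each preceded by a common reduced word. -/
lemma BraidRelations.exists_isReducedWord_prod_eq {M : Type*} [Monoid M] {T : Fin n → M}
    (hT : BraidRelations T) {w : Perm (Fin (n + 1))} {i j : Fin n} (hi : IsDescent w i)
    (hj : IsDescent w j) :
    ∃ p q, IsReducedWord (p ++ [i]) w ∧ IsReducedWord (q ++ [j]) w ∧
      ((p ++ [i]).map T).prod = ((q ++ [j]).map T).prod := by
  wlog hij : i ≤ j generalizing i j
  · obtain ⟨q, p, hq, hp, hpq⟩ := this hj hi (le_of_not_ge hij)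
    exact ⟨p, q, hp, hq, hpq.symm⟩
  rcases lt_trichotomy ((i : ℕ) + 1) j with hlt | heq | hgt
  · obtain ⟨l, hp, hq⟩ := exists_isReducedWord_of_commute hi hj hlt
    refine ⟨_, _, hp, hq, ?_⟩
    simp only [List.map_append, List.map_singleton, List.prod_append, List.prod_singleton,
      mul_assoc, hT.commute hlt]
  · obtain ⟨l, hp, hq⟩ := exists_isReducedWord_of_braid hi hj heq
    refine ⟨_, _, hp, hq, ?_⟩
    have hbraid := hT.braid heq
    rw [mul_assoc, mul_assoc] at hbraid
    simp only [List.map_append, List.map_singleton, List.prod_append, List.prod_singleton,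
      mul_assoc, hbraid]
  · obtain rfl : i = j := le_antisymm hij (Nat.lt_succ_iff.1 hgt)
    obtain ⟨l, hl⟩ := exists_isReducedWord (w * simpleTransposition i)
    have hl' := isReducedWord_append_singleton.2 ⟨hi, hl⟩
    exact ⟨l, l, hl', hl', rfl⟩

theorem BraidRelations.prod_map_eq_of_isReducedWord {M : Type*} [Monoid M] {T : Fin n → M}
    (hT : BraidRelations T) {l l' : List (Fin n)} {w : Perm (Fin (n + 1))}
    (hl : IsReducedWord l w) (hl' : IsReducedWord l' w) :
    (l.map T).prod = (l'.map T).prod := by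
  induction hk : len w generalizing l l' w with
  | zero =>
    rw [List.length_eq_zero_iff.1 (hl.2.trans hk), List.length_eq_zero_iff.1 (hl'.2.trans hk)]
  | succ k ih =>
    have same_last {p q : List (Fin n)} {i : Fin n} (hp : IsReducedWord (p ++ [i]) w)
        (hq : IsReducedWord (q ++ [i]) w) :
        ((p ++ [i]).map T).prod = ((q ++ [i]).map T).prod := by
      obtain ⟨hi, hp⟩ := isReducedWord_append_singleton.1 hp
      have hlen := len_mul_simpleTransposition_of_isDescent hi
      rw [List.map_append, List.map_append, List.prod_append, List.prod_append,
        ih hp (isReducedWord_append_singleton.1 hq).2 (by omega)]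
    have exists_last {u : List (Fin n)} (hu : IsReducedWord u w) : ∃ m i, u = m ++ [i] :=
      u.eq_nil_or_concat'.resolve_left fun h => by
        have := hu.2
        rw [h, List.length_nil] at this
        omega
    obtain ⟨m, i, rfl⟩ := exists_last hl
    obtain ⟨m', j, rfl⟩ := exists_last hl'
    obtain ⟨p, q, hp, hq, hpq⟩ := hT.exists_isReducedWord_prod_eq
      (isReducedWord_append_singleton.1 hl).1 (isReducedWord_append_singleton.1 hl').1
    exact (same_last hl hp).trans (hpq.trans (same_last hq hl'))

lemma w0_mul_self (N : ℕ) : w0 N * w0 N = 1 :=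
  Equiv.ext Fin.rev_rev

lemma w0_inv (N : ℕ) : (w0 N)⁻¹ = w0 N :=
  inv_eq_of_mul_eq_one_right (w0_mul_self N)

lemma w0_mul_simpleTransposition_mul_w0 (i : Fin n) :
    w0 (n + 1) * simpleTransposition i * w0 (n + 1) = simpleTransposition i.rev := by
  have hconj := swap_apply_apply (w0 (n + 1)) i.castSucc i.succ
  rw [w0_inv] at hconj
  rw [simpleTransposition, ← hconj, simpleTransposition, swap_comm, ← Fin.rev_succ,
    ← Fin.rev_castSucc]
  rfl

lemma isDescent_w0_conj {w : Perm (Fin (n + 1))} {i : Fin n} (h : IsDescent w i) :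
    IsDescent (w0 (n + 1) * w * w0 (n + 1)) i.rev := by
  rw [IsDescent, ← Fin.rev_succ, ← Fin.rev_castSucc]
  change (w i.castSucc.rev.rev).rev < (w i.succ.rev.rev).rev
  rwa [Fin.rev_rev, Fin.rev_rev, Fin.rev_lt_rev]

lemma IsReducedWord.w0_conj {l : List (Fin n)} {w : Perm (Fin (n + 1))}
    (h : IsReducedWord l w) :
    IsReducedWord (l.map Fin.rev) (w0 (n + 1) * w * w0 (n + 1)) := by
  induction l using List.reverseRecOn generalizing w with
  | nil =>
    rw [isReducedWord_nil_iff.1 h, mul_one, w0_mul_self]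
    exact isReducedWord_nil_iff.2 rfl
  | append_singleton l i ih =>
    obtain ⟨hi, hl⟩ := isReducedWord_append_singleton.1 h
    rw [List.map_append, List.map_singleton, isReducedWord_append_singleton]
    refine ⟨isDescent_w0_conj hi, ?_⟩
    convert ih hl using 1
    rw [← w0_mul_simpleTransposition_mul_w0]
    calc w0 (n + 1) * w * w0 (n + 1) * (w0 (n + 1) * simpleTransposition i * w0 (n + 1))
        = w0 (n + 1) * w * (w0 (n + 1) * w0 (n + 1)) * simpleTransposition i * w0 (n + 1) := by
          group
      _ = w0 (n + 1) * (w * simpleTransposition i) * w0 (n + 1) := by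
          rw [w0_mul_self, mul_one, mul_assoc (w0 (n + 1)) w]

end ReducedWords

/-! ### Schubert polynomials as products of simple divided differences -/

section SimpleDividedDifference

variable {n : ℕ}

/-- The operator `∂ᵢ` attached to the `i`-th variable (counted from `0`) and the next one. -/
noncomputable def simpleDividedDifference (R : Type*) [CommRing R] [IsDomain R] (i : Fin n) :
    Module.End R (MvPolynomial (Fin (n + 1)) R) :=
  dividedDifference (Fin.castSucc_lt_succ (i := i)).ne

lemma braidRelations_simpleDividedDifference (R : Type*) [CommRing R] [IsDomain R] :
    BraidRelations (simpleDividedDifference R : Fin n → _) where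
  commute i j hij := LinearMap.ext fun f => by
    rw [Module.End.mul_apply, Module.End.mul_apply]
    refine dividedDifference_comm _ _ ?_ ?_ ?_ ?_ f <;>
    simp only [ne_eq, Fin.ext_iff, Fin.val_castSucc, Fin.val_succ] <;> omega
  braid i j hij := LinearMap.ext fun f => by
    have hj : j.castSucc = i.succ := Fin.ext hij.symm
    simp only [simpleDividedDifference, hj]
    refine dividedDifference_braid _ _ ?_ f
    exact (Fin.castSucc_lt_succ.trans (hj ▸ Fin.castSucc_lt_succ)).ne

lemma divDiff_eq (i : Fin n) (f : MvPolynomial (Fin (n + 1)) ℤ) :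
    divDiff ((i : ℕ) + 1) f = simpleDividedDifference ℤ i f := by
  have hdvd := X_sub_X_dvd_sub_rename_swap i.castSucc i.succ f
  simp only [divDiff, t, pos_succ, pos_succ_succ, dif_pos hdvd]
  rfl

lemma divDiffWord_map (l : List (Fin n)) (f : MvPolynomial (Fin (n + 1)) ℤ) :
    divDiffWord (l.map fun i : Fin n => (i : ℕ) + 1) f =
      (l.map (simpleDividedDifference ℤ)).prod f := by
  induction l with
  | nil => rfl
  | cons i l ih =>
    rw [List.map_cons, List.map_cons, List.prod_cons, Module.End.mul_apply, ← ih, ← divDiff_eq]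
    rfl

lemma schubertPoly_eq_prod {w : Perm (Fin (n + 1))} {l : List (Fin n)}
    (hl : IsReducedWord l (w⁻¹ * w0 (n + 1))) :
    schubertPoly (n + 1) w =
      (l.map (simpleDividedDifference ℤ)).prod (staircase (n + 1)) := by
  obtain ⟨l', hl', hword⟩ := exists_isReducedWord_redWord (w⁻¹ * w0 (n + 1))
  rw [schubertPoly, hword, divDiffWord_map,
    (braidRelations_simpleDividedDifference ℤ).prod_map_eq_of_isReducedWord hl' hl]

end SimpleDividedDifference

/-! ### The automorphism `xᵢ ↦ -x_{n+1-i}` -/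

section NegRename

variable {σ τ R : Type*} [CommRing R]

/-- The isomorphism of polynomial rings sending each variable `x_i` to `-x_{e i}`; for `e = w₀` it
induces the required automorphism of `Hₙ`. -/
noncomputable def negRename (R : Type*) [CommRing R] (e : σ ≃ τ) :
    MvPolynomial σ R ≃ₐ[R] MvPolynomial τ R :=
  AlgEquiv.ofAlgHom (aeval fun i => -X (e i)) (aeval fun i => -X (e.symm i))
    (by ext i; simp) (by ext i; simp)

lemma negRename_X (e : σ ≃ τ) (i : σ) : negRename R e (X i) = -X (e i) :=
  aeval_X _ i

lemma negRename_symm (e : σ ≃ τ) : (negRename R e).symm = negRename R e.symm :=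
  rfl

lemma rename_negRename {υ : Type*} (e : σ ≃ τ) (e' : τ ≃ υ) (f : MvPolynomial σ R) :
    rename e' (negRename R e f) = negRename R (e.trans e') f := by
  have h : (rename e').comp (negRename R e).toAlgHom = (negRename R (e.trans e')).toAlgHom := by
    ext i
    simp [negRename_X]
  exact DFunLike.congr_fun h f

lemma negRename_rename {υ : Type*} (e : σ ≃ τ) (e' : τ ≃ υ) (f : MvPolynomial σ R) :
    negRename R e' (rename e f) = negRename R (e.trans e') f := by
  have h : (negRename R e').toAlgHom.comp (rename e) = (negRename R (e.trans e')).toAlgHom := by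
    ext i
    simp [negRename_X]
  exact DFunLike.congr_fun h f

lemma constantCoeff_negRename (e : σ ≃ τ) (f : MvPolynomial σ R) :
    constantCoeff (negRename R e f) = constantCoeff f := by
  have h : constantCoeff.comp (negRename R e).toAlgHom.toRingHom = constantCoeff := by
    refine ringHom_ext (fun r => ?_) fun i => ?_
    · exact (congrArg constantCoeff ((negRename R e).commutes r)).trans <|
        (constantCoeff_C τ r).trans (constantCoeff_C σ r).symm
    · simp [negRename_X]
  exact DFunLike.congr_fun h f

lemma isSymmetric_negRename (e : σ ≃ τ) {f : MvPolynomial σ R} (hf : f.IsSymmetric) :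
    (negRename R e f).IsSymmetric := fun π => by
  have he : e.trans π = ((e.trans π).trans e.symm).trans e := by
    rw [Equiv.trans_assoc, Equiv.symm_trans_self, Equiv.trans_refl]
  rw [rename_negRename, he, ← negRename_rename, hf]

lemma negRename_dividedDifference [IsDomain R] [DecidableEq σ] [DecidableEq τ] (e : σ ≃ τ)
    {a b : σ} (h : a ≠ b) (f : MvPolynomial σ R) :
    negRename R e (dividedDifference h f) =
      dividedDifference (e.injective.ne h.symm) (negRename R e f) := by
  refine (dividedDifference_eq _ ?_).symm
  have hswap : e.trans (swap (e b) (e a)) = (swap a b).trans e := by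
    ext c
    simp [e.injective.map_swap, swap_comm (e b)]
  rw [rename_negRename, hswap, ← negRename_rename, ← map_sub,
    ← X_sub_X_mul_dividedDifference h, map_mul, map_sub, negRename_X, negRename_X]
  ring

end NegRename

lemma negRename_w0_simpleDividedDifference {n : ℕ} {R : Type*} [CommRing R] [IsDomain R]
    (i : Fin n) (f : MvPolynomial (Fin (n + 1)) R) :
    negRename R (w0 (n + 1)) (simpleDividedDifference R i f) =
      simpleDividedDifference R i.rev (negRename R (w0 (n + 1)) f) := by
  rw [simpleDividedDifference, negRename_dividedDifference, simpleDividedDifference]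
  congr 2
  · exact Fin.rev_succ i
  · exact Fin.rev_castSucc i

lemma negRename_w0_prod_simpleDividedDifference {n : ℕ} {R : Type*} [CommRing R] [IsDomain R]
    (l : List (Fin n)) (f : MvPolynomial (Fin (n + 1)) R) :
    negRename R (w0 (n + 1)) ((l.map (simpleDividedDifference R)).prod f) =
      ((l.map Fin.rev).map (simpleDividedDifference R)).prod (negRename R (w0 (n + 1)) f) := by
  induction l with
  | nil => rfl
  | cons i l ih =>
    simp only [List.map_cons, List.prod_cons, Module.End.mul_apply]
    rw [negRename_w0_simpleDividedDifference, ih]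

/-! ### The ideal of positive symmetric polynomials -/

section SymIdeal

variable {N : ℕ}

lemma rename_mem_symIdeal (e : Perm (Fin N)) {f : MvPolynomial (Fin N) ℤ} (hf : f ∈ symIdeal N) :
    rename e f ∈ symIdeal N := by
  have hle : symIdeal N ≤ (symIdeal N).comap (rename e) :=
    Ideal.span_le.2 fun p hp => by
      rw [SetLike.mem_coe, Ideal.mem_comap, hp.1 e]
      exact Ideal.subset_span hp
  exact hle hf

lemma negRename_mem_symIdeal (e : Perm (Fin N)) {f : MvPolynomial (Fin N) ℤ}
    (hf : f ∈ symIdeal N) : negRename ℤ e f ∈ symIdeal N := by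
  have hle : symIdeal N ≤ (symIdeal N).comap (negRename ℤ e) :=
    Ideal.span_le.2 fun p hp => Ideal.subset_span
      ⟨isSymmetric_negRename e hp.1, (constantCoeff_negRename e p).trans hp.2⟩
  exact hle hf

lemma symIdeal_eq_map_negRename (e : Perm (Fin N)) :
    symIdeal N = (symIdeal N).map ((negRename ℤ e).toRingEquiv : _ →+* _) := by
  refine le_antisymm (fun f hf => ?_) (Ideal.map_le_iff_le_comap.2 fun f hf =>
    negRename_mem_symIdeal e hf)
  have hmem := Ideal.mem_map_of_mem (negRename ℤ e).toRingEquiv.toRingHom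
    (negRename_mem_symIdeal e.symm hf)
  rw [← negRename_symm] at hmem
  exact (negRename ℤ e).apply_symm_apply f ▸ hmem

lemma prod_simpleDividedDifference_mem_symIdeal {n : ℕ} (l : List (Fin n))
    {f : MvPolynomial (Fin (n + 1)) ℤ} (hf : f ∈ symIdeal (n + 1)) :
    (l.map (simpleDividedDifference ℤ)).prod f ∈ symIdeal (n + 1) := by
  induction l with
  | nil => exact hf
  | cons i l ih =>
    rw [List.map_cons, List.prod_cons, Module.End.mul_apply]
    exact dividedDifference_mem_span _ (fun p hp => hp.1 _) ih

end SymIdeal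

/-! ### The staircase monomial modulo the ideal -/

lemma constantCoeff_esymm (σ R : Type*) [Fintype σ] [CommSemiring R] {k : ℕ} (hk : k ≠ 0) :
    constantCoeff (esymm σ R k) = 0 := by
  rw [esymm, map_sum]
  refine Finset.sum_eq_zero fun s hs => ?_
  simp only [map_prod, constantCoeff_X, Finset.prod_const, (Finset.mem_powersetCard.1 hs).2,
    zero_pow hk]

lemma prod_X_add_C_mk_X_eq_X_pow (N : ℕ) :
    ∏ i : Fin N, (Polynomial.X + Polynomial.C (Ideal.Quotient.mk (symIdeal N) (X i))) =
      (Polynomial.X : Polynomial (HRing N)) ^ N := by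
  have hvieta := congrArg (Polynomial.map (Ideal.Quotient.mk (symIdeal N)))
    (prod_C_add_X_eq_sum_esymm ℤ (Fin N))
  simp only [Polynomial.map_prod, Polynomial.map_sum, Polynomial.map_add, Polynomial.map_X,
    Polynomial.map_C, Polynomial.map_mul, Polynomial.map_pow] at hvieta
  rw [hvieta, Finset.sum_eq_single 0]
  · simp
  · intro k _ hk
    have hmem : esymm (Fin N) ℤ k ∈ symIdeal N :=
      Ideal.subset_span ⟨esymm_isSymmetric _ _ _, constantCoeff_esymm _ _ hk⟩
    rw [Ideal.Quotient.eq_zero_iff_mem.2 hmem, map_zero, zero_mul]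
  · simp

/-- Evaluating at `-y₀` kills the left-hand side, so `y₀` annihilates `c * y₀ ^ (N - 1)`; with this
product in place of `c`, the hypothesis is inherited by the remaining variables. -/
lemma mul_prod_pow_mul_eq_zero {A : Type*} [CommRing A] {N : ℕ} (c : A) (y : Fin N → A)
    (h : Polynomial.C c * ∏ i, (Polynomial.X + Polynomial.C (y i)) =
      Polynomial.C c * Polynomial.X ^ N) (j : Fin N) :
    c * (∏ i, y i ^ (N - 1 - (i : ℕ))) * y j = 0 := by
  induction N generalizing c with
  | zero => exact j.elim0
  | succ N ih =>
    rw [Fin.prod_univ_succ] at h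
    have hzero : c * y 0 ^ N * y 0 = 0 := by
      have heval := congrArg (Polynomial.eval (-y 0)) h
      simp only [Polynomial.eval_mul, Polynomial.eval_C, Polynomial.eval_add, Polynomial.eval_X,
        Polynomial.eval_pow, neg_add_cancel, zero_mul, mul_zero] at heval
      have hsq : ((-1 : A) ^ (N + 1)) * (-1) ^ (N + 1) = 1 := by
        rw [← mul_pow, neg_one_mul, neg_neg, one_pow]
      rw [neg_pow] at heval
      linear_combination -c * y 0 ^ (N + 1) * hsq - (-1) ^ (N + 1) * heval
    have hexp : ∏ i, y i ^ (N + 1 - 1 - (i : ℕ)) =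
        y 0 ^ N * ∏ i : Fin N, y i.succ ^ (N - 1 - (i : ℕ)) := by
      rw [Fin.prod_univ_succ]
      congr 1
      refine Finset.prod_congr rfl fun i _ => ?_
      rw [Fin.val_succ]
      congr 1
      omega
    have htail :
        Polynomial.C (c * y 0 ^ N) * ∏ i : Fin N, (Polynomial.X + Polynomial.C (y i.succ)) =
          Polynomial.C (c * y 0 ^ N) * Polynomial.X ^ N := by
      have hC := congrArg Polynomial.C hzero
      rw [Polynomial.C_mul, Polynomial.C_0] at hC
      apply Polynomial.isRegular_X.left
      simp only [Polynomial.C_mul] at hC ⊢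
      linear_combination Polynomial.C (y 0 ^ N) * h -
        (∏ i : Fin N, (Polynomial.X + Polynomial.C (y i.succ))) * hC
    rw [hexp, ← mul_assoc]
    cases j using Fin.cases with
    | zero => rw [mul_right_comm, hzero, zero_mul]
    | succ j => exact ih _ _ htail j

lemma staircase_mul_X_mem_symIdeal {N : ℕ} (j : Fin N) : staircase N * X j ∈ symIdeal N := by
  have h := mul_prod_pow_mul_eq_zero 1 (fun i => Ideal.Quotient.mk (symIdeal N) (X i))
    (by rw [prod_X_add_C_mk_X_eq_X_pow]) j
  rw [one_mul] at h
  rw [← Ideal.Quotient.eq_zero_iff_mem, map_mul, staircase, map_prod]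
  simpa only [map_pow] using h

lemma X_succ_mul_staircase {n : ℕ} (i : Fin n) :
    X i.succ * staircase (n + 1) =
      X i.castSucc * rename (simpleTransposition i) (staircase (n + 1)) := by
  have hX (b : Fin (n + 1)) : (X b : MvPolynomial (Fin (n + 1)) ℤ) =
      ∏ j, X j ^ (if b = j then 1 else 0) := by
    rw [Finset.prod_pow_boole, if_pos (Finset.mem_univ b)]
  have hrename : rename (simpleTransposition i) (staircase (n + 1)) =
      ∏ j, X j ^ (n - (simpleTransposition i j : ℕ)) := by
    rw [staircase, map_prod, ← Equiv.prod_comp (simpleTransposition i)]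
    refine Finset.prod_congr rfl fun j _ => ?_
    rw [map_pow, rename_X, simpleTransposition, swap_apply_self, Nat.add_sub_cancel]
  rw [hrename, hX i.succ, hX i.castSucc, staircase, ← Finset.prod_mul_distrib,
    ← Finset.prod_mul_distrib]
  refine Finset.prod_congr rfl fun j _ => ?_
  rw [← pow_add, ← pow_add]
  congr 1
  simp only [simpleTransposition, swap_apply_def, apply_ite Fin.val, Fin.ext_iff, Fin.val_succ,
    Fin.val_castSucc]
  split_ifs <;> omega

lemma simpleDividedDifference_staircase_mul_X {n : ℕ} (i : Fin n) :
    simpleDividedDifference ℤ i (staircase (n + 1) * X i.castSucc) =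
      staircase (n + 1) + rename (simpleTransposition i) (staircase (n + 1)) := by
  apply dividedDifference_eq
  rw [map_mul, rename_X, swap_apply_left]
  have h := X_succ_mul_staircase i
  rw [simpleTransposition] at h ⊢
  linear_combination -h

lemma staircase_add_rename_mem_symIdeal {n : ℕ} (i : Fin n) :
    staircase (n + 1) + rename (simpleTransposition i) (staircase (n + 1)) ∈ symIdeal (n + 1) := by
  rw [← simpleDividedDifference_staircase_mul_X]
  exact dividedDifference_mem_span _ (fun p hp => hp.1 _) (staircase_mul_X_mem_symIdeal _)

lemma rename_staircase_sub_sign_smul_mem_symIdeal {n : ℕ} (w : Perm (Fin (n + 1))) :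
    rename w (staircase (n + 1)) - Perm.sign w • staircase (n + 1) ∈ symIdeal (n + 1) := by
  obtain ⟨l, rfl, -⟩ := exists_isReducedWord w
  induction l with
  | nil => simp
  | cons i l ih =>
    set w := (l.map simpleTransposition).prod
    rw [List.map_cons, List.prod_cons]
    have hsign : Perm.sign (simpleTransposition i * w) = -Perm.sign w := by
      rw [Perm.sign_mul, simpleTransposition, Perm.sign_swap Fin.castSucc_lt_succ.ne, neg_one_mul]
    convert add_mem (rename_mem_symIdeal (simpleTransposition i) ih)
      ((symIdeal (n + 1)).smul_of_tower_mem (Perm.sign w)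
        (staircase_add_rename_mem_symIdeal i)) using 1
    rw [Perm.coe_mul, ← rename_rename, hsign]
    simp only [Units.smul_def, map_sub, map_zsmul, Units.val_neg, neg_smul, smul_add]
    abel

lemma sign_w0 (N : ℕ) : Perm.sign (w0 N) = ∏ i : Fin N, (-1) ^ (N - 1 - (i : ℕ)) := by
  rw [Perm.sign_eq_prod_prod_Ioi]
  refine Finset.prod_congr rfl fun i _ => ?_
  have hneg : ∀ j ∈ Finset.Ioi i, (if w0 N i < w0 N j then 1 else -1 : ℤˣ) = -1 := fun j hj =>
    if_neg (Fin.rev_lt_rev.not.2 (Finset.mem_Ioi.1 hj).not_gt)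
  rw [Finset.prod_congr rfl hneg, Finset.prod_const, Fin.card_Ioi]

lemma negRename_w0_staircase (N : ℕ) :
    negRename ℤ (w0 N) (staircase N) = Perm.sign (w0 N) • rename (w0 N) (staircase N) := by
  rw [sign_w0, Units.smul_def, zsmul_eq_mul, Units.coe_prod, Int.cast_prod, staircase, map_prod,
    map_prod, ← Finset.prod_mul_distrib]
  refine Finset.prod_congr rfl fun i _ => ?_
  rw [map_pow, map_pow, negRename_X, rename_X, neg_pow]
  norm_cast

lemma negRename_w0_staircase_sub_mem_symIdeal (n : ℕ) :
    negRename ℤ (w0 (n + 1)) (staircase (n + 1)) - staircase (n + 1) ∈ symIdeal (n + 1) := by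
  have h := (symIdeal (n + 1)).smul_of_tower_mem (Perm.sign (w0 (n + 1)))
    (rename_staircase_sub_sign_smul_mem_symIdeal (w0 (n + 1)))
  rwa [smul_sub, smul_smul, Int.units_mul_self, one_smul, ← negRename_w0_staircase] at h

/-- There is a ring automorphism of `Hₙ` sending `𝔖_w` to `𝔖_{w₀ww₀}` for all `w`
(here the paper's `n` is `n+1`). -/
theorem exists_ring_automorphism_schubert (n : ℕ) :
    ∃ φ : HRing (n + 1) ≃+* HRing (n + 1),
      ∀ w : Equiv.Perm (Fin (n + 1)),
        φ (SS (n + 1) w) = SS (n + 1) (w0 (n + 1) * w * w0 (n + 1)) := by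
  refine ⟨Ideal.quotientEquiv _ _ (negRename ℤ (w0 (n + 1))).toRingEquiv
    (symIdeal_eq_map_negRename _), fun w => ?_⟩
  obtain ⟨l, hl⟩ := exists_isReducedWord (w⁻¹ * w0 (n + 1))
  have hconj : (w0 (n + 1) * w * w0 (n + 1))⁻¹ * w0 (n + 1) =
      w0 (n + 1) * (w⁻¹ * w0 (n + 1)) * w0 (n + 1) := by
    simp only [mul_inv_rev, w0_inv, mul_assoc]
  have hl' : IsReducedWord (l.map Fin.rev)
      ((w0 (n + 1) * w * w0 (n + 1))⁻¹ * w0 (n + 1)) := hconj ▸ hl.w0_conj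
  rw [SS, Ideal.quotientEquiv_mk, SS, Ideal.Quotient.eq, schubertPoly_eq_prod hl,
    schubertPoly_eq_prod hl']
  change negRename ℤ (w0 (n + 1)) _ - _ ∈ _
  rw [negRename_w0_prod_simpleDividedDifference, ← map_sub]
  exact prod_simpleDividedDifference_mem_symIdeal _ (negRename_w0_staircase_sub_mem_symIdeal n)

end SchubertPieri
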